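/- arXiv:1810.01315 — 2 statements merged into one kernel-verified Lean document; each statement's English description precedes it below -/
import Mathlib

section
/- No group of homeomorphisms of the Alexandroff square acts topologically transitively: for every subgroup G of the homeomorphism group of 𝔸 there exist nonempty open sets U, V ⊆ 𝔸 such that g(U) ∩ V = ∅ for every g ∈ G. -/
open Set

/-- The unit interval `[0,1]` with its Euclidean (subspace) topology. -/
local notation "𝕀" => unitInterval

/-- The generating family for the Alexandroff square topology on `[0,1] × [0,1]`:
sets `{x} × U` with `U` open in `𝕀` and `x ∉ U`, together with sets
`([0,1] × U) \ (F × [0,1])` with `U` open in `𝕀` and `F` finite. -/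
def alexBasis : Set (Set (𝕀 × 𝕀)) :=
  {S | (∃ (x : 𝕀) (U : Set 𝕀), IsOpen U ∧ x ∉ U ∧ S = ({x} : Set 𝕀) ×ˢ U) ∨
       (∃ (U F : Set 𝕀), IsOpen U ∧ F.Finite ∧ S = ((univ : Set 𝕀) ×ˢ U) \ (F ×ˢ (univ : Set 𝕀)))}

/-- The Alexandroff square topology. -/
def alexTop : TopologicalSpace (𝕀 × 𝕀) := TopologicalSpace.generateFrom alexBasis

/-- The group of self-homeomorphisms of a topological space, under composition. -/
instance homeoGroup {X : Type*} [TopologicalSpace X] : Group (X ≃ₜ X) where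
  mul f g := g.trans f
  one := Homeomorph.refl X
  inv := Homeomorph.symm
  mul_assoc _ _ _ := rfl
  one_mul _ := Homeomorph.ext fun _ => rfl
  mul_one _ := Homeomorph.ext fun _ => rfl
  inv_mul_cancel := Homeomorph.self_trans_symm

/-!
The diagonal is a topological invariant: its points are exactly those without a separable
neighbourhood. Indeed a neighbourhood of `(a, a)` contains `(x, a)` for all but finitely many `x`,
hence meets uncountably many of the punctured columns `{x} × ([0,1] \ {x})`, which are open,
pairwise disjoint and separable. So every self-homeomorphism `h` induces a homeomorphism of the
diagonal, a copy of `[0,1]`, and sends `(0, 0)` to `(0, 0)` or `(1, 1)`. The punctured column over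
`0` is connected and has `(0, 0)` in its closure; its image is connected and avoids the diagonal, so
it lies in the column of `h (0, 0)`, that is, over `0` or `1`, and misses every other punctured
column.
-/

open Filter Function TopologicalSpace Topology

theorem countable_of_pairwiseDisjoint_isOpen_subset_isSeparable {X ι : Type*} [TopologicalSpace X]
    {s : Set X} (hs : IsSeparable s) {a : Set ι} {O : ι → Set X} (hdisj : a.PairwiseDisjoint O)
    (hopen : ∀ i ∈ a, IsOpen (O i)) (hne : ∀ i ∈ a, (O i).Nonempty) (hsub : ∀ i ∈ a, O i ⊆ s) :
    a.Countable := by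
  obtain ⟨c, hc, hsc⟩ := hs
  have hmeet : ∀ i : a, ∃ x : c, ↑x ∈ O i := by
    rintro ⟨i, hi⟩
    obtain ⟨x, hx⟩ := hne i hi
    obtain ⟨y, hyO, hyc⟩ := mem_closure_iff.1 (hsc (hsub i hi hx)) _ (hopen i hi) hx
    exact ⟨⟨y, hyc⟩, hyO⟩
  choose f hfO using hmeet
  have hf : Injective f := fun i j hij =>
    Subtype.ext (hdisj.elim_set i.2 j.2 (f i) (hfO i) (hij ▸ hfO j))
  have : Countable c := hc
  exact hf.countable

theorem map_bot_eq_bot_or_top_of_continuous_bijective {α β : Type*}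
    [ConditionallyCompleteLinearOrder α] [DenselyOrdered α] [OrderBot α] [TopologicalSpace α]
    [OrderTopology α] [LinearOrder β] [BoundedOrder β] [TopologicalSpace β]
    [OrderClosedTopology β] {f : α → β} (hf : Continuous f) (hbij : Bijective f) :
    f ⊥ = ⊥ ∨ f ⊥ = ⊤ := by
  obtain ⟨a, ha⟩ := hbij.surjective ⊥
  obtain ⟨b, hb⟩ := hbij.surjective ⊤
  rcases hf.strictMono_of_inj hbij.injective with hmono | hanti
  · exact .inl (le_bot_iff.1 (ha ▸ hmono.monotone bot_le))
  · exact .inr (top_le_iff.1 (hb ▸ hanti.antitone bot_le))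

/-- The Alexandroff square: a synonym of `𝕀 × 𝕀`, so that `alexTop` rather than the product
topology is found by instance search. -/
def AlexandroffSquare : Type := 𝕀 × 𝕀

namespace AlexandroffSquare

instance : TopologicalSpace AlexandroffSquare := alexTop

/-- The point `(x, y)` of the Alexandroff square. -/
def mk (x y : 𝕀) : AlexandroffSquare := (x, y)

/-- The first coordinate; it is not continuous. -/
def fst (p : AlexandroffSquare) : 𝕀 := Prod.fst p

/-- The second coordinate. -/
def snd (p : AlexandroffSquare) : 𝕀 := Prod.snd p

/-- The column over `x` punctured at its diagonal point `(x, x)`. -/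
def puncturedColumn (x : 𝕀) : Set AlexandroffSquare := {p | p.fst = x ∧ p.snd ≠ x}

variable {p q : AlexandroffSquare} {s : Set AlexandroffSquare} {x : 𝕀}

theorem eq_mk_snd_of_fst_eq (hp : p.fst = x) : p = mk x p.snd := Prod.ext hp rfl

theorem image_mk_compl_singleton (x : 𝕀) : mk x '' {x}ᶜ = puncturedColumn x :=
  Subset.antisymm (image_subset_iff.2 fun _ hy => ⟨rfl, hy⟩)
    fun p hp => ⟨p.snd, hp.2, (eq_mk_snd_of_fst_eq hp.1).symm⟩

theorem pairwise_disjoint_puncturedColumn : Pairwise (Disjoint on puncturedColumn) :=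
  fun _ _ hxy => disjoint_left.2 fun _ hx hy => hxy (hx.1.symm.trans hy.1)

theorem isOpen_puncturedColumn (x : 𝕀) : IsOpen (puncturedColumn x) :=
  isOpen_generateFrom_of_mem
    (.inl ⟨x, {x}ᶜ, isOpen_compl_singleton, notMem_compl_iff.2 rfl, rfl⟩)

theorem isOpen_snd_preimage_sdiff_fst_preimage {U F : Set 𝕀} (hU : IsOpen U) (hF : F.Finite) :
    IsOpen (snd ⁻¹' U \ fst ⁻¹' F) := by
  refine isOpen_generateFrom_of_mem (.inr ⟨U, F, hU, hF, ?_⟩)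
  rw [univ_prod, prod_univ]
  rfl

theorem isClosed_fst_preimage_singleton (x : 𝕀) : IsClosed (fst ⁻¹' {x}) := by
  simpa only [preimage_univ, ← compl_eq_univ_sdiff, isOpen_compl_iff] using
    isOpen_snd_preimage_sdiff_fst_preimage isOpen_univ (finite_singleton x)

theorem continuous_snd : Continuous snd :=
  continuous_def.2 fun U hU => by
    simpa only [preimage_empty, sdiff_empty] using
      isOpen_snd_preimage_sdiff_fst_preimage hU finite_empty

theorem continuous_mk (x : 𝕀) : Continuous (mk x) := by
  refine continuous_generateFrom_iff.2 ?_
  rintro _ (⟨z, U, hU, -, rfl⟩ | ⟨U, F, hU, -, rfl⟩)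
  · exact (isOpen_const (p := x = z)).and hU
  · exact (isOpen_const.and hU).and (isOpen_const (p := ¬(x ∈ F ∧ True)))

theorem continuous_mk_self : Continuous fun a => mk a a := by
  refine continuous_generateFrom_iff.2 ?_
  rintro _ (⟨z, U, -, hz, rfl⟩ | ⟨U, F, hU, hF, rfl⟩)
  · convert isOpen_empty
    exact eq_empty_of_forall_notMem fun a ⟨haz, haU⟩ => hz (haz ▸ haU)
  · rw [univ_prod, prod_univ]
    exact hU.sdiff hF.isClosed

theorem tendsto_mk_cofinite (a : 𝕀) : Tendsto (fun x => mk x a) cofinite (𝓝 (mk a a)) := by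
  refine tendsto_nhds_generateFrom_iff.2 ?_
  rintro _ (⟨z, U, -, hz, rfl⟩ | ⟨U, F, -, hF, rfl⟩) ha
  · obtain ⟨rfl, haU⟩ : a = z ∧ a ∈ U := ha
    exact absurd haU hz
  · filter_upwards [hF.compl_mem_cofinite] with x hx using ⟨ha.1, fun hxF => hx hxF.1⟩

theorem isSeparable_puncturedColumn (x : 𝕀) : IsSeparable (puncturedColumn x) :=
  image_mk_compl_singleton x ▸ (IsSeparable.of_separableSpace _).image (continuous_mk x)

theorem not_isSeparable_of_mem_nhds_mk_self {a : 𝕀} (hs : s ∈ 𝓝 (mk a a)) : ¬IsSeparable s := by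
  intro hsep
  have hmeet : ∀ᶠ x in cofinite, (puncturedColumn x ∩ interior s).Nonempty := by
    filter_upwards [tendsto_mk_cofinite a (interior_mem_nhds.2 hs), eventually_cofinite_ne a]
      with x hxs hxa using ⟨mk x a, ⟨rfl, hxa.symm⟩, hxs⟩
  have hcount : {x | (puncturedColumn x ∩ interior s).Nonempty}.Countable :=
    countable_of_pairwiseDisjoint_isOpen_subset_isSeparable hsep
      (fun x _ y _ hxy => (pairwise_disjoint_puncturedColumn hxy).mono inter_subset_left
        inter_subset_left)
      (fun x _ => (isOpen_puncturedColumn x).inter isOpen_interior) (fun _ hx => hx)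
      (fun _ _ => inter_subset_right.trans interior_subset)
  have huniv : (univ : Set 𝕀).Countable := by
    rw [← union_compl_self {x | (puncturedColumn x ∩ interior s).Nonempty}]
    exact hcount.union (mem_cofinite.1 hmeet).countable
  exact zero_lt_one.not_ge (Cardinal.Real.Icc_countable_iff.1 (countable_univ_iff.1 huniv))

theorem fst_eq_snd_iff_forall_mem_nhds_not_isSeparable :
    p.fst = p.snd ↔ ∀ s ∈ 𝓝 p, ¬IsSeparable s := by
  refine ⟨fun hp s hs => ?_, fun h => by_contra fun hp => ?_⟩
  · rw [eq_mk_snd_of_fst_eq hp] at hs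
    exact not_isSeparable_of_mem_nhds_mk_self hs
  · exact h _ ((isOpen_puncturedColumn p.fst).mem_nhds ⟨rfl, Ne.symm hp⟩)
      (isSeparable_puncturedColumn p.fst)

theorem fst_eq_of_isPreconnected_of_mem_closure (hs : IsPreconnected s)
    (hoff : ∀ p ∈ s, p.fst ≠ p.snd) (hp : p ∈ s) (hq : q ∈ closure s) : q.fst = p.fst := by
  have hcol : s ⊆ puncturedColumn p.fst :=
    hs.subset_left_of_subset_union (isOpen_puncturedColumn p.fst)
      (isClosed_fst_preimage_singleton p.fst).isOpen_compl
      (disjoint_left.2 fun _ hr hr' => hr' hr.1)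
      (fun r hr => (em (r.fst = p.fst)).imp (fun h => ⟨h, h ▸ (hoff r hr).symm⟩) id)
      ⟨p, hp, rfl, (hoff p hp).symm⟩
  exact closure_minimal (fun r hr => (hcol hr).1) (isClosed_fst_preimage_singleton p.fst) hq

theorem mk_self_mem_closure_puncturedColumn (x : 𝕀) : mk x x ∈ closure (puncturedColumn x) :=
  image_mk_compl_singleton x ▸
    image_closure_subset_closure_image (continuous_mk x)
      (mem_image_of_mem _ (dense_compl_singleton x x))

theorem isPreconnected_puncturedColumn_zero : IsPreconnected (puncturedColumn 0) := by
  have hIoi : ({0}ᶜ : Set 𝕀) = Ioi 0 := (Ioi_bot (α := 𝕀)).symm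
  rw [← image_mk_compl_singleton, hIoi]
  exact isPreconnected_Ioi.image _ (continuous_mk 0).continuousOn

variable (h : AlexandroffSquare ≃ₜ AlexandroffSquare)

theorem fst_map_eq_snd_map_iff : (h p).fst = (h p).snd ↔ p.fst = p.snd := by
  simp only [fst_eq_snd_iff_forall_mem_nhds_not_isSeparable]
  constructor
  · intro hp s hs hsep
    exact hp _ (h.isOpenMap.image_mem_nhds hs) (hsep.image h.continuous)
  · intro hp s hs hsep
    refine hp _ (h.continuous.continuousAt hs) ?_
    rw [← h.image_symm]
    exact hsep.image h.symm.continuous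

theorem map_mk_self (a : 𝕀) : h (mk a a) = mk (h (mk a a)).snd (h (mk a a)).snd :=
  eq_mk_snd_of_fst_eq ((fst_map_eq_snd_map_iff h).2 rfl)

theorem bijective_snd_map_mk_self : Bijective fun a => (h (mk a a)).snd := by
  refine bijective_iff_has_inverse.2 ⟨fun a => (h.symm (mk a a)).snd, fun a => ?_, fun a => ?_⟩
  · change (h.symm (mk (h (mk a a)).snd (h (mk a a)).snd)).snd = a
    rw [← map_mk_self h, h.symm_apply_apply]
    rfl
  · change (h (mk (h.symm (mk a a)).snd (h.symm (mk a a)).snd)).snd = a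
    rw [← map_mk_self h.symm, h.apply_symm_apply]
    rfl

theorem fst_map_mk_zero_zero : (h (mk 0 0)).fst = 0 ∨ (h (mk 0 0)).fst = 1 := by
  rw [(fst_map_eq_snd_map_iff h).2 rfl]
  exact map_bot_eq_bot_or_top_of_continuous_bijective
    (continuous_snd.comp (h.continuous.comp continuous_mk_self)) (bijective_snd_map_mk_self h)

theorem fst_map_of_mem_puncturedColumn_zero (hp : p ∈ puncturedColumn 0) :
    (h p).fst = 0 ∨ (h p).fst = 1 := by
  have hoff : ∀ q ∈ h '' puncturedColumn 0, q.fst ≠ q.snd := by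
    rintro _ ⟨q, hq, rfl⟩ hdiag
    exact hq.2 (((fst_map_eq_snd_map_iff h).1 hdiag).symm.trans hq.1)
  have hclosure : h (mk 0 0) ∈ closure (h '' puncturedColumn 0) :=
    image_closure_subset_closure_image h.continuous
      (mem_image_of_mem h (mk_self_mem_closure_puncturedColumn 0))
  rw [← fst_eq_of_isPreconnected_of_mem_closure
    (isPreconnected_puncturedColumn_zero.image h h.continuous.continuousOn) hoff
    (mem_image_of_mem h hp) hclosure]
  exact fst_map_mk_zero_zero h

end AlexandroffSquare

open AlexandroffSquare

/-- No subgroup of the homeomorphism group of the Alexandroff square acts topologically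
transitively: there are nonempty open sets `U`, `V` with `g(U) ∩ V = ∅` for all
`g` in the subgroup. -/
theorem alexandroff_no_topologically_transitive_subgroup
    (G : Subgroup (@Homeomorph (𝕀 × 𝕀) (𝕀 × 𝕀) alexTop alexTop)) :
    ∃ U V : Set (𝕀 × 𝕀), @IsOpen _ alexTop U ∧ @IsOpen _ alexTop V ∧
      U.Nonempty ∧ V.Nonempty ∧ ∀ g ∈ G, ⇑g '' U ∩ V = ∅ := by
  obtain ⟨m, hm0, hm1⟩ := exists_between (zero_lt_one (α := 𝕀))
  refine ⟨puncturedColumn 0, puncturedColumn m, isOpen_puncturedColumn 0, isOpen_puncturedColumn m,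
    ⟨mk 0 1, rfl, one_ne_zero⟩, ⟨mk m 0, rfl, hm0.ne⟩, fun g _ => ?_⟩
  refine eq_empty_of_forall_notMem ?_
  rintro _ ⟨⟨p, hp, rfl⟩, hgp, -⟩
  rcases fst_map_of_mem_puncturedColumn_zero g hp with h0 | h1
  · exact hm0.ne (h0.symm.trans hgp)
  · exact hm1.ne (hgp.symm.trans h1)
end

section
/- No group of homeomorphisms of the lexicographically ordered square acts topologically transitively: for every subgroup G of the homeomorphism group of 𝕆 there exist nonempty open sets U, V ⊆ 𝕆 such that g(U) ∩ V = ∅ for every g ∈ G. -/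
open Set

/-- The unit interval `[0,1]`. -/
local notation "𝕀" => unitInterval

/-- The strict lexicographic order on `[0,1] × [0,1]`:
`(x,y) < (s,t)` iff `x < s`, or `x = s` and `y < t`. -/
def lexLT (p q : 𝕀 × 𝕀) : Prop := p.1 < q.1 ∨ (p.1 = q.1 ∧ p.2 < q.2)

/-- The order topology of the lexicographic order on `[0,1] × [0,1]`, generated by the
open rays. -/
def lexTop : TopologicalSpace (𝕀 × 𝕀) :=
  TopologicalSpace.generateFrom
    ({S | ∃ a, S = {x | lexLT a x}} ∪ {S | ∃ a, S = {x | lexLT x a}})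

/-!
The path components of the square are its columns `{a} × [0,1]`: a path leaving its column would
sweep through every column over some interval of the base, which is uncountable, and so pull
uncountably many disjoint nonempty open sets back to the separable space `[0,1]`. A homeomorphism
therefore permutes the columns and preserves the size of their frontiers. The frontier of the
leftmost column contains at most its top, whereas that of a column over an interior point of the
base consists of its bottom and its top. So no homeomorphism moves a point of the leftmost column
into a column of the second kind, and both columns contain nonempty open sets.
-/

open TopologicalSpace

theorem image_pathComponent_homeomorph {X Y : Type*} [TopologicalSpace X] [TopologicalSpace Y]
    (h : X ≃ₜ Y) (x : X) : h '' pathComponent x = pathComponent (h x) := by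
  refine Subset.antisymm ?_ fun y hy => ?_
  · rintro _ ⟨y, hy, rfl⟩
    exact hy.map h.continuous
  · refine ⟨h.symm y, ?_, h.apply_symm_apply y⟩
    simpa [pathComponent] using hy.map h.symm.continuous

theorem frontier_Icc_of_nonempty_Iio_Ioi {γ : Type*} [LinearOrder γ] [DenselyOrdered γ]
    [TopologicalSpace γ] [OrderTopology γ] {a b : γ} (hab : a ≤ b)
    (ha : (Iio a).Nonempty) (hb : (Ioi b).Nonempty) : frontier (Icc a b) = {a, b} := by
  rw [isClosed_Icc.frontier_eq, ← Ici_inter_Iic, interior_inter, interior_Ici' ha,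
    interior_Iic' hb, Ici_inter_Iic, Ioi_inter_Iio, Icc_sdiff_Ioo_same hab]

theorem denselyOrdered_of_not_countable_Ioo {α : Type*} [Preorder α]
    (hα : ∀ a a' : α, a < a' → ¬(Ioo a a').Countable) : DenselyOrdered α where
  dense a a' h := by
    by_contra hgap
    have hempty : Ioo a a' = ∅ := not_nonempty_iff_eq_empty.1 hgap
    exact hα a a' h (hempty ▸ countable_empty)

section LexProduct

variable {α β : Type*}

/-- The column `{a} × β` of the lexicographic product `α ×ₗ β`. -/
def lexColumn (a : α) : Set (α ×ₗ β) := {p | (ofLex p).1 = a}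

variable [LinearOrder α] [LinearOrder β]

theorem Icc_toLex_subset_lexColumn (a : α) (b b' : β) :
    Icc (toLex (a, b)) (toLex (a, b')) ⊆ lexColumn a := fun _ hp =>
  le_antisymm (Prod.Lex.monotone_fst_ofLex hp.2) (Prod.Lex.monotone_fst_ofLex hp.1)

theorem lexColumn_eq_Icc [BoundedOrder β] (a : α) :
    (lexColumn a : Set (α ×ₗ β)) = Icc (toLex (a, ⊥)) (toLex (a, ⊤)) := by
  refine Subset.antisymm ?_ (Icc_toLex_subset_lexColumn a ⊥ ⊤)
  rintro p rfl
  simp [Prod.Lex.le_iff]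

theorem lexColumn_bot_eq_Iic [OrderBot α] [BoundedOrder β] :
    (lexColumn ⊥ : Set (α ×ₗ β)) = Iic (toLex (⊥, ⊤)) := by
  rw [lexColumn_eq_Icc]
  exact Icc_bot

variable [TopologicalSpace (α ×ₗ β)] [OrderTopology (α ×ₗ β)]

theorem continuous_toLex_mk [TopologicalSpace β] [OrderTopology β] (a : α) :
    Continuous fun b : β => toLex (a, b) := by
  refine OrderTopology.continuous_iff.2 fun p => ?_
  obtain h | h | h := lt_trichotomy a (ofLex p).1
  · simp [preimage, Prod.Lex.lt_iff, h, h.not_gt, h.ne, h.ne']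
  · simpa [preimage, Prod.Lex.lt_iff, h] using ⟨isOpen_Ioi, isOpen_Iio⟩
  · simp [preimage, Prod.Lex.lt_iff, h, h.not_gt, h.ne, h.ne']

theorem frontier_lexColumn_bot_subset [OrderBot α] [BoundedOrder β] :
    frontier (lexColumn ⊥ : Set (α ×ₗ β)) ⊆ {toLex (⊥, ⊤)} :=
  lexColumn_bot_eq_Iic (α := α) (β := β) ▸ frontier_Iic_subset _

theorem frontier_lexColumn [DenselyOrdered α] [DenselyOrdered β] [BoundedOrder β] {a : α}
    (hmin : ¬IsMin a) (hmax : ¬IsMax a) :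
    frontier (lexColumn a : Set (α ×ₗ β)) = {toLex (a, ⊥), toLex (a, ⊤)} := by
  obtain ⟨l, hl⟩ := not_isMin_iff.1 hmin
  obtain ⟨r, hr⟩ := not_isMax_iff.1 hmax
  rw [lexColumn_eq_Icc]
  refine frontier_Icc_of_nonempty_Iio_Ioi ?_ ⟨toLex (l, ⊥), ?_⟩ ⟨toLex (r, ⊤), ?_⟩
  · simp [Prod.Lex.toLex_le_toLex]
  · simp [Prod.Lex.toLex_lt_toLex, hl]
  · simp [Prod.Lex.toLex_lt_toLex, hr]

theorem countable_setOf_toLex_mem_range {X : Type*} [TopologicalSpace X] [SeparableSpace X]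
    {f : X → α ×ₗ β} (hf : Continuous f) {b₁ b₂ b₃ : β} (h₁₂ : b₁ < b₂) (h₂₃ : b₂ < b₃) :
    {a | toLex (a, b₂) ∈ range f}.Countable := by
  refine PairwiseDisjoint.countable_of_isOpen
    (s := fun a => f ⁻¹' Ioo (toLex (a, b₁)) (toLex (a, b₃))) ?_
    (fun _ _ => isOpen_Ioo.preimage hf) ?_
  · refine fun a _ a' _ hne => disjoint_left.2 fun x hx hx' => hne ?_
    have hxa : f x ∈ lexColumn a := Icc_toLex_subset_lexColumn a b₁ b₃ (Ioo_subset_Icc_self hx)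
    have hxa' : f x ∈ lexColumn a' := Icc_toLex_subset_lexColumn a' b₁ b₃ (Ioo_subset_Icc_self hx')
    exact hxa.symm.trans hxa'
  · rintro a ⟨x, hx⟩
    exact ⟨x, by simp [hx, Prod.Lex.toLex_lt_toLex, h₁₂, h₂₃]⟩

theorem fst_ofLex_eq_of_continuous [DenselyOrdered β] [Nontrivial β]
    (hα : ∀ a a' : α, a < a' → ¬(Ioo a a').Countable) {X : Type*} [TopologicalSpace X]
    [SeparableSpace X] [PreconnectedSpace X] {f : X → α ×ₗ β} (hf : Continuous f) (x y : X) :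
    (ofLex (f x)).1 = (ofLex (f y)).1 := by
  suffices hle : ∀ x y, (ofLex (f y)).1 ≤ (ofLex (f x)).1 from le_antisymm (hle y x) (hle x y)
  refine fun x y => not_lt.1 fun hlt => hα _ _ hlt ?_
  obtain ⟨b₁, b₃, h₁₃⟩ := exists_pair_lt β
  obtain ⟨b₂, h₁₂, h₂₃⟩ := exists_between h₁₃
  refine (countable_setOf_toLex_mem_range hf h₁₂ h₂₃).mono fun a ha => ?_
  exact intermediate_value_univ x y hf
    ⟨(Prod.Lex.lt_iff.2 (.inl ha.1)).le, (Prod.Lex.lt_iff.2 (.inl ha.2)).le⟩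

theorem pathComponent_eq_lexColumn [TopologicalSpace β] [OrderTopology β] [PathConnectedSpace β]
    [Nontrivial β] (hα : ∀ a a' : α, a < a' → ¬(Ioo a a').Countable) (p : α ×ₗ β) :
    pathComponent p = lexColumn (ofLex p).1 := by
  have : DenselyOrdered β := denselyOrdered_of_preconnectedSpace
  refine Subset.antisymm ?_ fun q hq => ?_
  · rintro q ⟨γ⟩
    have hends := fst_ofLex_eq_of_continuous hα γ.continuous 1 0
    rwa [γ.source, γ.target] at hends
  · have hq' : q = toLex ((ofLex p).1, (ofLex q).2) := congrArg toLex (Prod.ext hq rfl)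
    rw [hq']
    exact (PathConnectedSpace.joined (ofLex p).2 (ofLex q).2).map (continuous_toLex_mk _)

theorem homeomorph_apply_notMem_lexColumn [OrderBot α] [BoundedOrder β] [Nontrivial β]
    [TopologicalSpace β] [OrderTopology β] [PathConnectedSpace β]
    (hα : ∀ a a' : α, a < a' → ¬(Ioo a a').Countable) (g : (α ×ₗ β) ≃ₜ (α ×ₗ β))
    {p : α ×ₗ β} (hp : p ∈ lexColumn ⊥) {c : α} (hmin : ¬IsMin c) (hmax : ¬IsMax c) :
    g p ∉ lexColumn c := by
  intro hgp
  have : DenselyOrdered α := denselyOrdered_of_not_countable_Ioo hα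
  have : DenselyOrdered β := denselyOrdered_of_preconnectedSpace
  have himage : g '' lexColumn ⊥ = lexColumn c := by
    rw [← show (ofLex p).1 = ⊥ from hp, ← show (ofLex (g p)).1 = c from hgp,
      ← pathComponent_eq_lexColumn hα, ← pathComponent_eq_lexColumn hα,
      image_pathComponent_homeomorph]
  have hfrontier : (frontier (lexColumn c : Set (α ×ₗ β))).Subsingleton := by
    rw [← himage, ← g.image_frontier]
    exact (subsingleton_singleton.anti frontier_lexColumn_bot_subset).image g
  rw [frontier_lexColumn hmin hmax] at hfrontier
  simpa using hfrontier (mem_insert _ _) (mem_insert_of_mem _ rfl)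

theorem lex_square_no_topologically_transitive_subgroup_general [OrderBot α] [Nontrivial α]
    (hα : ∀ a a' : α, a < a' → ¬(Ioo a a').Countable) [BoundedOrder β] [Nontrivial β]
    [TopologicalSpace β] [OrderTopology β] [PathConnectedSpace β] :
    ∃ U V : Set (α ×ₗ β), IsOpen U ∧ IsOpen V ∧ U.Nonempty ∧ V.Nonempty ∧
      ∀ g : (α ×ₗ β) ≃ₜ (α ×ₗ β), g '' U ∩ V = ∅ := by
  have : DenselyOrdered α := denselyOrdered_of_not_countable_Ioo hα
  have : DenselyOrdered β := denselyOrdered_of_preconnectedSpace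
  obtain ⟨d, hd⟩ := exists_ne (⊥ : α)
  obtain ⟨c, hbot, hcd⟩ := exists_between hd.bot_lt
  obtain ⟨b, hb, hb'⟩ := exists_between (bot_lt_top (α := β))
  refine ⟨Iio (toLex (⊥, ⊤)), Ioo (toLex (c, ⊥)) (toLex (c, ⊤)), isOpen_Iio, isOpen_Ioo,
    ⟨toLex (⊥, ⊥), by simp [Prod.Lex.toLex_lt_toLex]⟩,
    ⟨toLex (c, b), by simp [Prod.Lex.toLex_lt_toLex, hb, hb']⟩,
    fun g => eq_empty_of_forall_notMem ?_⟩
  rintro _ ⟨⟨p, hp, rfl⟩, hgp⟩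
  have hp : p ∈ lexColumn ⊥ := lexColumn_bot_eq_Iic.ge (Iio_subset_Iic_self hp)
  have hgp : g p ∈ lexColumn c := Icc_toLex_subset_lexColumn c ⊥ ⊤ (Ioo_subset_Icc_self hgp)
  exact homeomorph_apply_notMem_lexColumn hα g hp hbot.not_isMin hcd.not_isMax hgp

end LexProduct

theorem not_countable_Ioo_unitInterval {a b : 𝕀} (hab : a < b) : ¬(Ioo a b).Countable := by
  intro h
  have himage : Ioo (a : ℝ) b ⊆ Subtype.val '' Ioo a b := fun x hx =>
    ⟨⟨x, a.2.1.trans hx.1.le, hx.2.le.trans b.2.2⟩, hx, rfl⟩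
  exact (Cardinal.Real.Ioo_countable_iff.1 ((h.image _).mono himage)).not_gt hab

instance pathConnectedSpace_unitInterval : PathConnectedSpace 𝕀 :=
  isPathConnected_iff_pathConnectedSpace.1 <|
    (convex_Icc (0 : ℝ) 1).isPathConnected (nonempty_Icc.2 zero_le_one)

/-- `Lex` is a type synonym, so `lexTop` can be read as a topology on `𝕀 ×ₗ 𝕀`. -/
theorem orderTopology_lexTop : @OrderTopology (𝕀 ×ₗ 𝕀) lexTop _ := by
  have hlt (p q : 𝕀 ×ₗ 𝕀) : lexLT (ofLex p) (ofLex q) ↔ p < q := Prod.Lex.lt_iff.symm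
  have hIoi (a : 𝕀 ×ₗ 𝕀) : {x | lexLT (ofLex a) x} = Ioi a := ext fun x => hlt a x
  have hIio (a : 𝕀 ×ₗ 𝕀) : {x | lexLT x (ofLex a)} = Iio a := ext fun x => hlt x a
  refine @OrderTopology.mk (𝕀 ×ₗ 𝕀) lexTop _ (congrArg generateFrom (ext fun S => ?_))
  constructor
  · rintro (⟨a, rfl⟩ | ⟨a, rfl⟩)
    exacts [⟨a, .inl (hIoi a)⟩, ⟨a, .inr (hIio a)⟩]
  · rintro ⟨a, rfl | rfl⟩
    exacts [.inl ⟨a, (hIoi a).symm⟩, .inr ⟨a, (hIio a).symm⟩]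

/-- No subgroup of the homeomorphism group of the lexicographically ordered square acts
topologically transitively: there are nonempty open sets `U`, `V` with
`g(U) ∩ V = ∅` for all `g` in the subgroup. -/
theorem lex_square_no_topologically_transitive_subgroup
    (G : Subgroup (@Homeomorph (𝕀 × 𝕀) (𝕀 × 𝕀) lexTop lexTop)) :
    ∃ U V : Set (𝕀 × 𝕀), @IsOpen _ lexTop U ∧ @IsOpen _ lexTop V ∧
      U.Nonempty ∧ V.Nonempty ∧ ∀ g ∈ G, ⇑g '' U ∩ V = ∅ := by
  obtain ⟨U, V, hU, hV, hUne, hVne, hdisj⟩ :=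
    @lex_square_no_topologically_transitive_subgroup_general 𝕀 𝕀 _ _ lexTop orderTopology_lexTop
      _ _ (fun _ _ => not_countable_Ioo_unitInterval) _ _ _ _ _
  exact ⟨U, V, hU, hV, hUne, hVne, fun g _ => hdisj g⟩
end
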